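/- Let 1 ≤ p ≤ q ≤ ∞ and 1/p = 1/q + 1/r. For a positive semidefinite operator X on ℂ^d ⊗ ℂ^{d'}, the infimum of ‖A‖_{S_{2r}}·‖Y‖_{S_q}·‖A*‖_{S_{2r}} over all factorizations X = (A ⊗ I) Y (A* ⊗ I) with A ∈ M_d(ℂ) positive definite equals the infimum over all factorizations X = (A ⊗ I) Y (B ⊗ I) with arbitrary A, B ∈ M_d(ℂ) of ‖A‖_{S_{2r}}·‖Y‖_{S_q}·‖B‖_{S_{2r}}. -/

import Mathlib

open scoped Kronecker ComplexOrder ENNReal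
open Matrix

/-- Operator (spectral) norm of a rectangular complex matrix. -/
noncomputable def opN {α β : Type*} [Fintype α] [Fintype β] [DecidableEq β]
    (M : Matrix α β ℂ) : ℝ :=
  ‖LinearMap.toContinuousLinearMap (Matrix.toEuclideanLin M)‖

/-- Schatten `p`-norm of a square complex matrix: `(∑ singular values ^ p)^{1/p}`. -/
noncomputable def sNorm {n : Type*} [Fintype n] [DecidableEq n] (p : ℝ)
    (M : Matrix n n ℂ) : ℝ :=
  (∑ i, ((Matrix.posSemidef_conjTranspose_mul_self M).1.eigenvalues i) ^ (p / 2)) ^ (1 / p)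

/-- Schatten norm with exponent in `ℝ≥0∞`, the exponent `p = ∞` giving the operator norm. -/
noncomputable def sNormE {n : Type*} [Fintype n] [DecidableEq n] (p : ℝ≥0∞)
    (M : Matrix n n ℂ) : ℝ :=
  if p = ⊤ then opN M else sNorm p.toReal M

/-! Given a factorization `X = (A ⊗ 1) * Y * (B ⊗ 1)` and `ε > 0`, put `P = A * Aᴴ + ε` and
`Q = Bᴴ * B + ε`, let `G = P # Q` be their geometric mean, the positive definite solution of the
Riccati equation `G * P⁻¹ * G = Q`, and let `C = √G`. The matrix
`Y' = (C⁻¹ ⊗ 1) * X * (C⁻¹ ⊗ 1)` is Hermitian and, by the Riccati equation, similar to `F * Y * K`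
with contractions `F` and `K`. The Schatten norm of a Hermitian matrix is the `ℓ^q` norm of its
eigenvalues, which Weyl's majorant inequality bounds by the Schatten norm of any similar matrix, so
`‖Y'‖_q ≤ ‖Y‖_q`. The Cauchy–Schwarz inequality `‖P # Q‖_r² ≤ ‖P‖_r * ‖Q‖_r` bounds
`‖C‖_{2r}² = ‖G‖_r`, and `ε → 0` finishes the proof. -/

section LpNorm

variable {ι κ E F G : Type*} [Fintype ι] [Fintype κ] [SeminormedAddCommGroup E]
  [SeminormedAddCommGroup F] [SeminormedAddCommGroup G]

lemma rpow_sum_mul_le_sum_mul_rpow {p : ℝ} (hp : 1 ≤ p) {a s : κ → ℝ} (ha : ∀ k, 0 ≤ a k)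
    (hsum : ∑ k, a k ≤ 1) (hs : ∀ k, 0 ≤ s k) :
    (∑ k, a k * s k) ^ p ≤ ∑ k, a k * s k ^ p := by
  have hp₀ : 0 < p := zero_lt_one.trans_le hp
  have hnonneg : 0 ≤ ∑ k, a k * s k ^ p :=
    Finset.sum_nonneg fun k _ => mul_nonneg (ha k) (Real.rpow_nonneg (hs k) _)
  have hweight : (∑ k, a k) ^ (1 - p⁻¹) ≤ 1 :=
    Real.rpow_le_one (Finset.sum_nonneg fun k _ => ha k) hsum
      (sub_nonneg.2 (inv_le_one_of_one_le₀ hp))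
  rw [← Real.le_rpow_inv_iff_of_pos (Finset.sum_nonneg fun k _ => mul_nonneg (ha k) (hs k))
    hnonneg hp₀]
  calc ∑ k, a k * s k ≤ (∑ k, a k) ^ (1 - p⁻¹) * (∑ k, a k * s k ^ p) ^ p⁻¹ :=
        Real.inner_le_weight_mul_Lp_of_nonneg Finset.univ hp a s ha hs
    _ ≤ (∑ k, a k * s k ^ p) ^ p⁻¹ :=
        mul_le_of_le_one_left (Real.rpow_nonneg hnonneg _) hweight

lemma norm_toLp_le_of_substochastic {q : ℝ≥0∞} [Fact (1 ≤ q)] {a : ι → κ → ℝ}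
    (ha : ∀ i k, 0 ≤ a i k) (hrow : ∀ i, ∑ k, a i k ≤ 1) (hcol : ∀ k, ∑ i, a i k ≤ 1)
    {x : ι → E} {s : κ → F} (hx : ∀ i, ‖x i‖ ≤ ∑ k, a i k * ‖s k‖) :
    ‖WithLp.toLp q x‖ ≤ ‖WithLp.toLp q s‖ := by
  obtain rfl | hq := eq_or_ne q ⊤
  · rw [PiLp.norm_toLp, PiLp.norm_toLp, pi_norm_le_iff_of_nonneg (norm_nonneg _)]
    intro i
    calc ‖x i‖ ≤ ∑ k, a i k * ‖s k‖ := hx i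
      _ ≤ ∑ k, a i k * ‖s‖ :=
          Finset.sum_le_sum fun k _ => mul_le_mul_of_nonneg_left (norm_le_pi_norm s k) (ha i k)
      _ = (∑ k, a i k) * ‖s‖ := (Finset.sum_mul ..).symm
      _ ≤ ‖s‖ := mul_le_of_le_one_left (norm_nonneg _) (hrow i)
  have hq₁ : 1 ≤ q.toReal := (ENNReal.dichotomy q).resolve_left hq
  have hq₀ : 0 < q.toReal := zero_lt_one.trans_le hq₁
  rw [PiLp.norm_eq_sum hq₀, PiLp.norm_eq_sum hq₀]
  refine Real.rpow_le_rpow (by positivity) ?_ (by positivity)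
  calc ∑ i, ‖x i‖ ^ q.toReal ≤ ∑ i, (∑ k, a i k * ‖s k‖) ^ q.toReal :=
        Finset.sum_le_sum fun i _ => Real.rpow_le_rpow (norm_nonneg _) (hx i) hq₀.le
    _ ≤ ∑ i, ∑ k, a i k * ‖s k‖ ^ q.toReal := Finset.sum_le_sum fun i _ =>
        rpow_sum_mul_le_sum_mul_rpow hq₁ (ha i) (hrow i) fun k => norm_nonneg _
    _ = ∑ k, (∑ i, a i k) * ‖s k‖ ^ q.toReal := by
        rw [Finset.sum_comm]
        simp_rw [Finset.sum_mul]
    _ ≤ ∑ k, ‖s k‖ ^ q.toReal := Finset.sum_le_sum fun k _ =>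
        mul_le_of_le_one_left (by positivity) (hcol k)

lemma norm_toLp_mono {q : ℝ≥0∞} [Fact (1 ≤ q)] {x : ι → E} {y : ι → F}
    (h : ∀ i, ‖x i‖ ≤ ‖y i‖) : ‖WithLp.toLp q x‖ ≤ ‖WithLp.toLp q y‖ := by
  classical
  refine norm_toLp_le_of_substochastic (a := fun i k => if i = k then 1 else 0)
    (fun i k => ?_) (fun i => ?_) (fun k => ?_) fun i => ?_
  · split_ifs <;> norm_num
  · simp
  · simp
  · simpa using h i

lemma norm_toLp_congr {q : ℝ≥0∞} [Fact (1 ≤ q)] {x : ι → E} {y : ι → F}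
    (h : ∀ i, ‖x i‖ = ‖y i‖) : ‖WithLp.toLp q x‖ = ‖WithLp.toLp q y‖ :=
  le_antisymm (norm_toLp_mono fun i => (h i).le) (norm_toLp_mono fun i => (h i).ge)

lemma norm_toLp_sq {r : ℝ≥0∞} [Fact (1 ≤ r)] (x : ι → ℝ) :
    ‖WithLp.toLp r (fun i => x i ^ 2)‖ = ‖WithLp.toLp (2 * r) x‖ ^ 2 := by
  obtain rfl | hr := eq_or_ne r ⊤
  · rw [ENNReal.mul_top two_ne_zero, PiLp.norm_toLp, PiLp.norm_toLp, sq,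
      ← CStarRing.norm_star_mul_self]
    congr 1 with i
    simp [sq]
  have hr₀ : 0 < r.toReal := ENNReal.toReal_pos (one_pos.trans_le Fact.out).ne' hr
  have h2r : (2 * r).toReal = 2 * r.toReal := by simp
  rw [PiLp.norm_eq_sum hr₀, PiLp.norm_eq_sum (by rw [h2r]; positivity), h2r, ← Real.rpow_natCast,
    ← Real.rpow_mul (by positivity)]
  congr 1
  · refine Finset.sum_congr rfl fun i _ => ?_
    rw [norm_pow, ← Real.rpow_natCast, ← Real.rpow_mul (norm_nonneg _)]
    simp
  · field_simp
    simp

-- The bound `2|t|‖z i‖ ≤ t²‖x i‖ + ‖y i‖` passes to the norms; then optimise over `t`.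
lemma norm_toLp_sq_le_mul {r : ℝ≥0∞} [Fact (1 ≤ r)] {x : ι → E} {y : ι → F} {z : ι → G}
    (h : ∀ i, ‖z i‖ ^ 2 ≤ ‖x i‖ * ‖y i‖) :
    ‖WithLp.toLp r z‖ ^ 2 ≤ ‖WithLp.toLp r x‖ * ‖WithLp.toLp r y‖ := by
  let a : PiLp r fun _ : ι => ℝ := WithLp.toLp r fun i => ‖x i‖
  let b : PiLp r fun _ : ι => ℝ := WithLp.toLp r fun i => ‖y i‖
  let c : PiLp r fun _ : ι => ℝ := WithLp.toLp r fun i => ‖z i‖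
  rw [← norm_toLp_congr (x := fun i => ‖x i‖) (y := x) fun i => norm_norm _,
    ← norm_toLp_congr (x := fun i => ‖y i‖) (y := y) fun i => norm_norm _,
    ← norm_toLp_congr (x := fun i => ‖z i‖) (y := z) fun i => norm_norm _]
  change ‖c‖ ^ 2 ≤ ‖a‖ * ‖b‖
  have hquad (t : ℝ) : 0 ≤ ‖a‖ * (t * t) + -(2 * ‖c‖) * t + ‖b‖ := by
    have hamgm (i : ι) : ‖(2 * t) * ‖z i‖‖ ≤ ‖t ^ 2 * ‖x i‖ + ‖y i‖‖ := by
      rw [Real.norm_eq_abs, Real.norm_eq_abs]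
      refine sq_le_sq.1 ?_
      nlinarith [h i, sq_nonneg (t ^ 2 * ‖x i‖ - ‖y i‖), sq_nonneg t]
    have hnorm : ‖(2 * t) • c‖ ≤ ‖t ^ 2 • a + b‖ := norm_toLp_mono hamgm
    have htri : ‖t ^ 2 • a + b‖ ≤ t ^ 2 * ‖a‖ + ‖b‖ := by
      refine (norm_add_le _ _).trans_eq ?_
      rw [norm_smul, Real.norm_of_nonneg (sq_nonneg t)]
    have ht : 2 * t * ‖c‖ ≤ ‖(2 * t) • c‖ := by
      rw [norm_smul]
      gcongr
      exact Real.le_norm_self _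
    linarith
  have := discrim_le_zero hquad
  rw [discrim] at this
  linarith

end LpNorm

section GramSchmidt

open InnerProductSpace Submodule

variable {𝕜 E ι : Type*} [RCLike 𝕜] [NormedAddCommGroup E] [InnerProductSpace 𝕜 E]

lemma inner_gramSchmidtNormed_eq_zero_of_mem_span [LinearOrder ι] [LocallyFiniteOrderBot ι]
    [WellFoundedLT ι] {f : ι → E} (hf : LinearIndependent 𝕜 f) {i : ι} {x : E}
    (hx : x ∈ span 𝕜 (f '' Set.Iio i)) : inner 𝕜 (gramSchmidtNormed 𝕜 f i) x = 0 := by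
  rw [← span_gramSchmidt_Iio 𝕜 f, ← span_gramSchmidtNormed] at hx
  have hle : span 𝕜 (gramSchmidtNormed 𝕜 f '' Set.Iio i) ≤
      LinearMap.ker (innerₛₗ 𝕜 (gramSchmidtNormed 𝕜 f i)) := by
    rw [span_le]
    rintro _ ⟨j, hj, rfl⟩
    exact (gramSchmidtNormed_orthonormal hf).2 (ne_of_gt hj)
  exact hle hx

lemma gramSchmidt_sub_mem_span [LinearOrder ι] [LocallyFiniteOrderBot ι] [WellFoundedLT ι]
    (f : ι → E) (i : ι) : gramSchmidt 𝕜 f i - f i ∈ span 𝕜 (f '' Set.Iio i) := by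
  rw [gramSchmidt_def, ← span_gramSchmidt_Iio 𝕜 f, sub_sub_cancel_left]
  refine neg_mem (sum_mem fun j hj => ?_)
  rw [starProjection_singleton]
  exact smul_mem _ _ (subset_span ⟨j, Finset.mem_Iio.1 hj, rfl⟩)

lemma map_sub_smul_mem_span_of_eigenvectors {R M : Type*} [Ring R] [AddCommGroup M] [Module R M]
    {Z : M →ₗ[R] M} {f : ι → M} {μ : ι → R} (hZ : ∀ i, Z (f i) = μ i • f i) (s : Set ι) (c : R)
    {x : M} (hx : x ∈ span R (f '' s)) : Z x - c • x ∈ span R (f '' s) := by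
  have hle : span R (f '' s) ≤ (span R (f '' s)).comap Z := by
    rw [span_le]
    rintro _ ⟨j, hj, rfl⟩
    rw [SetLike.mem_coe, mem_comap, hZ]
    exact smul_mem _ _ (subset_span ⟨j, hj, rfl⟩)
  exact sub_mem (hle hx) (smul_mem _ _ hx)

-- In the Gram–Schmidt basis of a basis of eigenvectors, `Z` is upper triangular.
lemma inner_gramSchmidtNormed_map_of_eigenvectors [LinearOrder ι] [LocallyFiniteOrderBot ι]
    [WellFoundedLT ι] {Z : E →ₗ[𝕜] E} {f : ι → E} (hf : LinearIndependent 𝕜 f) {μ : ι → 𝕜}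
    (hZ : ∀ i, Z (f i) = μ i • f i) (i : ι) :
    inner 𝕜 (gramSchmidtNormed 𝕜 f i) (Z (gramSchmidtNormed 𝕜 f i)) = μ i := by
  have hunnormed : Z (gramSchmidt 𝕜 f i) - μ i • gramSchmidt 𝕜 f i ∈ span 𝕜 (f '' Set.Iio i) := by
    simpa only [map_sub, hZ, smul_sub, sub_sub_sub_cancel_right] using
      map_sub_smul_mem_span_of_eigenvectors hZ _ (μ i) (gramSchmidt_sub_mem_span f i)
  have hnormed : Z (gramSchmidtNormed 𝕜 f i) - μ i • gramSchmidtNormed 𝕜 f i ∈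
      span 𝕜 (f '' Set.Iio i) := by
    rw [gramSchmidtNormed, map_smul, smul_comm, ← smul_sub]
    exact smul_mem _ _ hunnormed
  have hzero := inner_gramSchmidtNormed_eq_zero_of_mem_span hf hnormed
  rwa [inner_sub_right, inner_smul_right, inner_self_eq_norm_sq_to_K,
    (gramSchmidtNormed_orthonormal hf).1 i, RCLike.ofReal_one, one_pow, mul_one,
    sub_eq_zero] at hzero

lemma exists_orthonormal_inner_map_of_eigenvectors [Finite ι] {Z : E →ₗ[𝕜] E} {f : ι → E}
    (hf : LinearIndependent 𝕜 f) {μ : ι → 𝕜} (hZ : ∀ i, Z (f i) = μ i • f i) :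
    ∃ e : ι → E, Orthonormal 𝕜 e ∧ ∀ i, inner 𝕜 (e i) (Z (e i)) = μ i := by
  let σ := Finite.equivFin ι
  have hfσ : LinearIndependent 𝕜 (f ∘ σ.symm) := hf.comp _ σ.symm.injective
  refine ⟨gramSchmidtNormed 𝕜 (f ∘ σ.symm) ∘ σ,
    (gramSchmidtNormed_orthonormal hfσ).comp _ σ.injective, fun i => ?_⟩
  simpa using inner_gramSchmidtNormed_map_of_eigenvectors hfσ (fun j => hZ (σ.symm j)) (σ i)

end GramSchmidt

section Schatten

open scoped Matrix.Norms.L2Operator MatrixOrder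

variable {n : Type*} [Fintype n]

lemma conjTranspose_mul_self_apply_self {m : Type*} (M : Matrix n m ℂ) (i : m) :
    (Mᴴ * M) i i = ((∑ k, ‖M k i‖ ^ 2 : ℝ) : ℂ) := by
  simp [Matrix.mul_apply, Complex.conj_mul']

lemma norm_sq_conjTranspose_mul_apply_le {m : Type*} (L R : Matrix n m ℂ) (i j : m) :
    ‖(Lᴴ * R) i j‖ ^ 2 ≤ ‖(Lᴴ * L) i i‖ * ‖(Rᴴ * R) j j‖ := by
  have hnonneg (M : Matrix n m ℂ) (i : m) : 0 ≤ ∑ k, ‖M k i‖ ^ 2 :=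
    Finset.sum_nonneg fun k _ => sq_nonneg _
  have htri : ‖(Lᴴ * R) i j‖ ≤ ∑ k, ‖L k i‖ * ‖R k j‖ := by
    simpa [Matrix.mul_apply] using norm_sum_le Finset.univ fun k => Lᴴ i k * R k j
  rw [conjTranspose_mul_self_apply_self, conjTranspose_mul_self_apply_self, Complex.norm_real,
    Complex.norm_real, Real.norm_of_nonneg (hnonneg L i), Real.norm_of_nonneg (hnonneg R j)]
  exact (pow_le_pow_left₀ (norm_nonneg _) htri 2).trans (Finset.sum_mul_sq_le_sq_mul_sq _ _ _)

variable [DecidableEq n]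

lemma sum_norm_sq_col_le (M : Matrix n n ℂ) (i : n) : ∑ k, ‖M k i‖ ^ 2 ≤ ‖M‖ ^ 2 := by
  have h := M.l2_opNorm_mulVec (EuclideanSpace.single i 1)
  have h' := pow_le_pow_left₀ (norm_nonneg _) h 2
  simpa [EuclideanSpace.norm_sq_eq] using h'

lemma sum_norm_sq_row_le (M : Matrix n n ℂ) (i : n) : ∑ k, ‖M i k‖ ^ 2 ≤ ‖M‖ ^ 2 := by
  simpa [l2_opNorm_conjTranspose] using sum_norm_sq_col_le Mᴴ i

lemma norm_le_one_of_conjTranspose_mul_self_le_one {M : Matrix n n ℂ} (h : Mᴴ * M ≤ 1) :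
    ‖M‖ ≤ 1 := by
  have h₁ : ‖Mᴴ * M‖ ≤ 1 := (CStarAlgebra.norm_le_one_iff_of_nonneg _
    (Matrix.nonneg_iff_posSemidef.2 (Matrix.posSemidef_conjTranspose_mul_self M))).2 h
  rw [l2_opNorm_conjTranspose_mul_self, ← sq] at h₁
  exact (sq_le_one_iff₀ (norm_nonneg M)).1 h₁

lemma norm_mul_le_one {M N : Matrix n n ℂ} (hM : ‖M‖ ≤ 1) (hN : ‖N‖ ≤ 1) : ‖M * N‖ ≤ 1 :=
  (norm_mul_le M N).trans (mul_le_one₀ hM (norm_nonneg N) hN)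

lemma norm_conjTranspose_le_one {M : Matrix n n ℂ} (hM : ‖M‖ ≤ 1) : ‖Mᴴ‖ ≤ 1 :=
  (l2_opNorm_conjTranspose M).trans_le hM

lemma norm_toLp_diag_mul_diagonal_mul_le {q : ℝ≥0∞} [Fact (1 ≤ q)] {F K : Matrix n n ℂ}
    (hF : ‖F‖ ≤ 1) (hK : ‖K‖ ≤ 1) (s : n → ℝ) :
    ‖WithLp.toLp q (F * diagonal (fun i => (s i : ℂ)) * K).diag‖ ≤ ‖WithLp.toLp q s‖ := by
  have hF₂ : ‖F‖ ^ 2 ≤ 1 := pow_le_one₀ (norm_nonneg _) hF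
  have hK₂ : ‖K‖ ^ 2 ≤ 1 := pow_le_one₀ (norm_nonneg _) hK
  refine norm_toLp_le_of_substochastic (a := fun i k => (‖F i k‖ ^ 2 + ‖K k i‖ ^ 2) / 2)
    (fun i k => by positivity) (fun i => ?_) (fun k => ?_) (fun i => ?_)
  · rw [← Finset.sum_div, Finset.sum_add_distrib]
    linarith [sum_norm_sq_row_le F i, sum_norm_sq_col_le K i]
  · rw [← Finset.sum_div, Finset.sum_add_distrib]
    linarith [sum_norm_sq_col_le F k, sum_norm_sq_row_le K k]
  · rw [diag_apply, Matrix.mul_apply]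
    refine (norm_sum_le _ _).trans (Finset.sum_le_sum fun k _ => ?_)
    rw [Matrix.mul_diagonal, norm_mul, norm_mul, Complex.norm_real]
    nlinarith [two_mul_le_add_sq ‖F i k‖ ‖K k i‖, norm_nonneg (s k)]

/-- The singular values of a square matrix `M`, as a family on the index type of `M` with no
prescribed order: the square roots of the eigenvalues of `Mᴴ * M`. They turn `sNormE q M` into an
`ℓ^q` norm, uniformly in `q`. -/
noncomputable def singularValue (M : Matrix n n ℂ) (i : n) : ℝ :=
  √((Matrix.posSemidef_conjTranspose_mul_self M).1.eigenvalues i)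

lemma singularValue_nonneg (M : Matrix n n ℂ) (i : n) : 0 ≤ singularValue M i :=
  Real.sqrt_nonneg _

lemma star_eigenvectorUnitary_mul_mul {H : Matrix n n ℂ} (hH : H.IsHermitian) :
    (hH.eigenvectorUnitary : Matrix n n ℂ)ᴴ * H * hH.eigenvectorUnitary =
      diagonal fun i => (hH.eigenvalues i : ℂ) := by
  have h := hH.conjStarAlgAut_star_eigenvectorUnitary
  rwa [Unitary.conjStarAlgAut_star_apply] at h

lemma eq_eigenvectorUnitary_mul_diagonal_mul {H : Matrix n n ℂ} (hH : H.IsHermitian) :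
    H = hH.eigenvectorUnitary * diagonal (fun i => (hH.eigenvalues i : ℂ)) *
      (hH.eigenvectorUnitary : Matrix n n ℂ)ᴴ := by
  have h := hH.spectral_theorem
  rwa [Unitary.conjStarAlgAut_apply] at h

lemma norm_le_one_of_mem_unitary {U : Matrix n n ℂ} (hU : U ∈ unitary (Matrix n n ℂ)) : ‖U‖ ≤ 1 :=
  norm_le_one_of_conjTranspose_mul_self_le_one (Unitary.star_mul_self_of_mem hU).le

lemma exists_unitary_conj_conjTranspose_mul_self (M : Matrix n n ℂ) :
    ∃ W ∈ unitary (Matrix n n ℂ),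
      Wᴴ * (Mᴴ * M) * W = diagonal fun i => ((singularValue M i ^ 2 : ℝ) : ℂ) := by
  let hM := Matrix.posSemidef_conjTranspose_mul_self M
  refine ⟨hM.1.eigenvectorUnitary, hM.1.eigenvectorUnitary.2, ?_⟩
  rw [star_eigenvectorUnitary_mul_mul]
  congr 1 with i
  rw [singularValue, Real.sq_sqrt (hM.eigenvalues_nonneg i)]

lemma conjTranspose_mul_diagonal_mul_self {N : Matrix n n ℂ} {s : n → ℝ}
    (h : Nᴴ * N = diagonal fun i => ((s i ^ 2 : ℝ) : ℂ)) (f : n → ℝ) :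
    (N * diagonal fun i => (f i : ℂ))ᴴ * (N * diagonal fun i => (f i : ℂ)) =
      diagonal fun i => (((f i * s i) ^ 2 : ℝ) : ℂ) := by
  rw [conjTranspose_mul, diagonal_conjTranspose, Matrix.mul_assoc, ← Matrix.mul_assoc Nᴴ, h,
    diagonal_mul_diagonal, diagonal_mul_diagonal]
  congr 1 with i
  simp only [Pi.star_apply, RCLike.star_def, Complex.conj_ofReal]
  push_cast
  ring

lemma exists_polar_of_conjTranspose_mul_self {N : Matrix n n ℂ} {s : n → ℝ}
    (h : Nᴴ * N = diagonal fun i => ((s i ^ 2 : ℝ) : ℂ)) :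
    ∃ U : Matrix n n ℂ, ‖U‖ ≤ 1 ∧ N = U * diagonal (fun i => (s i : ℂ)) ∧
      Uᴴ * N = diagonal fun i => (s i : ℂ) := by
  -- The inverse `(s i)⁻¹ = 0` where `s i = 0` makes `U` a partial isometry.
  refine ⟨N * diagonal fun i => (((s i)⁻¹ : ℝ) : ℂ), ?_, ?_, ?_⟩
  · refine (sq_le_one_iff₀ (norm_nonneg _)).1 ?_
    rw [sq, ← l2_opNorm_conjTranspose_mul_self, conjTranspose_mul_diagonal_mul_self h,
      l2_opNorm_diagonal, pi_norm_le_iff_of_nonneg zero_le_one]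
    intro i
    by_cases hi : s i = 0 <;> simp [hi]
  · rw [← sub_eq_zero, ← conjTranspose_mul_self_eq_zero]
    have hsub : N - N * (diagonal fun i => (((s i)⁻¹ : ℝ) : ℂ)) * (diagonal fun i => (s i : ℂ)) =
        N * diagonal fun i => ((1 - (s i)⁻¹ * s i : ℝ) : ℂ) := by
      rw [Matrix.mul_assoc, diagonal_mul_diagonal]
      nth_rw 1 [← Matrix.mul_one N]
      rw [← Matrix.mul_sub, ← diagonal_one, diagonal_sub]
      simp
    rw [hsub, conjTranspose_mul_diagonal_mul_self h, ← diagonal_zero]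
    congr 1 with i
    by_cases hi : s i = 0 <;> simp [hi]
  · rw [conjTranspose_mul, diagonal_conjTranspose, Matrix.mul_assoc, h, diagonal_mul_diagonal]
    congr 1 with i
    by_cases hi : s i = 0 <;> simp [hi, sq]

lemma exists_svd (M : Matrix n n ℂ) :
    ∃ U V : Matrix n n ℂ, ‖U‖ ≤ 1 ∧ ‖V‖ ≤ 1 ∧
      M = U * diagonal (fun i => (singularValue M i : ℂ)) * V ∧
      Uᴴ * M * Vᴴ = diagonal fun i => (singularValue M i : ℂ) := by
  obtain ⟨W, hW, hdiag⟩ := exists_unitary_conj_conjTranspose_mul_self M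
  obtain ⟨U, hU, hMW, hUMW⟩ := exists_polar_of_conjTranspose_mul_self (N := M * W)
    (by rw [← hdiag, conjTranspose_mul]; simp only [Matrix.mul_assoc])
  refine ⟨U, Wᴴ, hU, norm_conjTranspose_le_one (norm_le_one_of_mem_unitary hW), ?_, ?_⟩
  · rw [← hMW, Matrix.mul_assoc, ← star_eq_conjTranspose, Unitary.mul_star_self_of_mem hW,
      Matrix.mul_one]
  · rw [conjTranspose_conjTranspose, Matrix.mul_assoc, hUMW]

lemma sNormE_eq_norm_toLp_singularValue (q : ℝ≥0∞) [Fact (1 ≤ q)] (M : Matrix n n ℂ) :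
    sNormE q M = ‖WithLp.toLp q (singularValue M)‖ := by
  obtain rfl | hq := eq_or_ne q ⊤
  · obtain ⟨U, V, hU, hV, hM, hdiag⟩ := exists_svd M
    set D : Matrix n n ℂ := diagonal fun i => (singularValue M i : ℂ)
    have hD : ‖D‖ = ‖singularValue M‖ := by
      rw [l2_opNorm_diagonal, ← PiLp.norm_toLp, ← PiLp.norm_toLp]
      exact norm_toLp_congr fun i => Complex.norm_real _
    have hcontract {F K : Matrix n n ℂ} (N : Matrix n n ℂ) (hF : ‖F‖ ≤ 1) (hK : ‖K‖ ≤ 1) :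
        ‖F * N * K‖ ≤ ‖N‖ :=
      (norm_mul_le _ _).trans <| (mul_le_of_le_one_right (norm_nonneg _) hK).trans <|
        (norm_mul_le _ _).trans <| mul_le_of_le_one_left (norm_nonneg _) hF
    have hle : ‖M‖ ≤ ‖D‖ := hM ▸ hcontract D hU hV
    have hge : ‖D‖ ≤ ‖M‖ := hdiag ▸
      hcontract M (norm_conjTranspose_le_one hU) (norm_conjTranspose_le_one hV)
    rw [sNormE, if_pos rfl, PiLp.norm_toLp, ← hD]
    exact le_antisymm hle hge
  · have hq₀ : 0 < q.toReal := ENNReal.toReal_pos (one_pos.trans_le Fact.out).ne' hq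
    rw [sNormE, if_neg hq, sNorm, PiLp.norm_eq_sum hq₀]
    congr 1
    refine Finset.sum_congr rfl fun i _ => ?_
    have hnonneg := (Matrix.posSemidef_conjTranspose_mul_self M).eigenvalues_nonneg i
    change _ = ‖singularValue M i‖ ^ q.toReal
    rw [Real.norm_of_nonneg (singularValue_nonneg M i), singularValue, Real.sqrt_eq_rpow,
      ← Real.rpow_mul hnonneg]
    congr 1
    ring

lemma sNormE_nonneg (q : ℝ≥0∞) [Fact (1 ≤ q)] (M : Matrix n n ℂ) : 0 ≤ sNormE q M := by
  rw [sNormE_eq_norm_toLp_singularValue]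
  exact norm_nonneg _

lemma norm_toLp_diag_mul_mul_le (q : ℝ≥0∞) [Fact (1 ≤ q)] {F K : Matrix n n ℂ} (hF : ‖F‖ ≤ 1)
    (hK : ‖K‖ ≤ 1) (M : Matrix n n ℂ) :
    ‖WithLp.toLp q (F * M * K).diag‖ ≤ sNormE q M := by
  obtain ⟨U, V, hU, hV, hM, -⟩ := exists_svd M
  have hfactor : F * M * K =
      (F * U) * diagonal (fun i => (singularValue M i : ℂ)) * (V * K) := by
    nth_rw 1 [hM]
    simp only [Matrix.mul_assoc]
  rw [sNormE_eq_norm_toLp_singularValue, hfactor]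
  exact norm_toLp_diag_mul_diagonal_mul_le (norm_mul_le_one hF hU) (norm_mul_le_one hV hK) _

lemma sNormE_le_of_forall_diag {q : ℝ≥0∞} [Fact (1 ≤ q)] {M : Matrix n n ℂ} {c : ℝ}
    (h : ∀ F K : Matrix n n ℂ, ‖F‖ ≤ 1 → ‖K‖ ≤ 1 → ‖WithLp.toLp q (F * M * K).diag‖ ≤ c) :
    sNormE q M ≤ c := by
  obtain ⟨U, V, hU, hV, -, hdiag⟩ := exists_svd M
  refine le_trans (le_of_eq ?_)
    (h Uᴴ Vᴴ (norm_conjTranspose_le_one hU) (norm_conjTranspose_le_one hV))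
  rw [sNormE_eq_norm_toLp_singularValue, hdiag, diag_diagonal]
  exact norm_toLp_congr fun i => (Complex.norm_real _).symm

lemma sNormE_mul_mul_le (q : ℝ≥0∞) [Fact (1 ≤ q)] {F K : Matrix n n ℂ} (hF : ‖F‖ ≤ 1)
    (hK : ‖K‖ ≤ 1) (M : Matrix n n ℂ) : sNormE q (F * M * K) ≤ sNormE q M := by
  refine sNormE_le_of_forall_diag fun F' K' hF' hK' => ?_
  have hassoc : F' * (F * M * K) * K' = (F' * F) * M * (K * K') := by
    simp only [Matrix.mul_assoc]
  rw [hassoc]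
  exact norm_toLp_diag_mul_mul_le q (norm_mul_le_one hF' hF) (norm_mul_le_one hK hK') M

lemma sNormE_diagonal_le (q : ℝ≥0∞) [Fact (1 ≤ q)] (s : n → ℝ) :
    sNormE q (diagonal fun i => (s i : ℂ)) ≤ ‖WithLp.toLp q s‖ :=
  sNormE_le_of_forall_diag fun _ _ hF hK => norm_toLp_diag_mul_diagonal_mul_le hF hK s

lemma sNormE_add_le (q : ℝ≥0∞) [Fact (1 ≤ q)] (M N : Matrix n n ℂ) :
    sNormE q (M + N) ≤ sNormE q M + sNormE q N := by
  refine sNormE_le_of_forall_diag fun F K hF hK => ?_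
  rw [Matrix.mul_add, Matrix.add_mul, diag_add, WithLp.toLp_add]
  exact (norm_add_le _ _).trans <| add_le_add (norm_toLp_diag_mul_mul_le q hF hK M)
    (norm_toLp_diag_mul_mul_le q hF hK N)

lemma sNormE_conjTranspose_le (q : ℝ≥0∞) [Fact (1 ≤ q)] (M : Matrix n n ℂ) :
    sNormE q Mᴴ ≤ sNormE q M := by
  refine sNormE_le_of_forall_diag fun F K hF hK => ?_
  have hstar : F * Mᴴ * K = (Kᴴ * M * Fᴴ)ᴴ := by
    simp only [conjTranspose_mul, conjTranspose_conjTranspose, Matrix.mul_assoc]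
  rw [hstar]
  refine (norm_toLp_congr fun i => ?_).trans_le <| norm_toLp_diag_mul_mul_le q
    (norm_conjTranspose_le_one hK) (norm_conjTranspose_le_one hF) M
  rw [diag_apply, conjTranspose_apply, norm_star, diag_apply]

lemma sNormE_conjTranspose (q : ℝ≥0∞) [Fact (1 ≤ q)] (M : Matrix n n ℂ) :
    sNormE q Mᴴ = sNormE q M :=
  le_antisymm (sNormE_conjTranspose_le q M) <| by
    simpa only [conjTranspose_conjTranspose] using sNormE_conjTranspose_le q Mᴴ

lemma sNormE_le_norm_toLp_eigenvalues (q : ℝ≥0∞) [Fact (1 ≤ q)] {H : Matrix n n ℂ}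
    (hH : H.IsHermitian) : sNormE q H ≤ ‖WithLp.toLp q hH.eigenvalues‖ := by
  have hU : (hH.eigenvectorUnitary : Matrix n n ℂ) ∈ unitary (Matrix n n ℂ) :=
    hH.eigenvectorUnitary.2
  nth_rw 1 [eq_eigenvectorUnitary_mul_diagonal_mul hH]
  exact (sNormE_mul_mul_le q (norm_le_one_of_mem_unitary hU)
    (norm_conjTranspose_le_one (norm_le_one_of_mem_unitary hU)) _).trans (sNormE_diagonal_le q _)

instance fact_one_le_two_mul (r : ℝ≥0∞) [Fact (1 ≤ r)] : Fact (1 ≤ 2 * r) :=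
  ⟨(Fact.out : 1 ≤ r).trans (le_mul_of_one_le_left zero_le one_le_two)⟩

lemma sNormE_conjTranspose_mul_self (r : ℝ≥0∞) [Fact (1 ≤ r)]
    (M : Matrix n n ℂ) : sNormE r (Mᴴ * M) = sNormE (2 * r) M ^ 2 := by
  obtain ⟨W, hW, hdiag⟩ := exists_unitary_conj_conjTranspose_mul_self M
  have hWn : ‖W‖ ≤ 1 := norm_le_one_of_mem_unitary hW
  have hWn' : ‖Wᴴ‖ ≤ 1 := norm_conjTranspose_le_one hWn
  have hfactor : Mᴴ * M = W * (diagonal fun i => ((singularValue M i ^ 2 : ℝ) : ℂ)) * Wᴴ := by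
    have hWW : W * Wᴴ = 1 := Unitary.mul_star_self_of_mem hW
    rw [← hdiag, Matrix.mul_assoc, Matrix.mul_assoc, hWW, Matrix.mul_one, ← Matrix.mul_assoc, hWW,
      Matrix.one_mul]
  rw [sNormE_eq_norm_toLp_singularValue (2 * r), ← norm_toLp_sq]
  refine le_antisymm ?_ ?_
  · nth_rw 1 [hfactor]
    exact (sNormE_mul_mul_le r hWn hWn' _).trans (sNormE_diagonal_le r _)
  · refine (norm_toLp_congr fun i => ?_).trans_le (norm_toLp_diag_mul_mul_le r hWn' hWn (Mᴴ * M))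
    rw [hdiag, diag_diagonal, Complex.norm_real]

lemma sNormE_mul_conjTranspose_self (r : ℝ≥0∞) [Fact (1 ≤ r)]
    (M : Matrix n n ℂ) : sNormE r (M * Mᴴ) = sNormE (2 * r) M ^ 2 := by
  simpa only [conjTranspose_conjTranspose, sNormE_conjTranspose] using
    sNormE_conjTranspose_mul_self r Mᴴ

lemma sNormE_conjTranspose_mul_sq_le (r : ℝ≥0∞) [Fact (1 ≤ r)] (L R : Matrix n n ℂ) :
    sNormE r (Lᴴ * R) ^ 2 ≤ sNormE r (Lᴴ * L) * sNormE r (Rᴴ * R) := by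
  rw [← Real.le_sqrt (sNormE_nonneg r _) (mul_nonneg (sNormE_nonneg r _) (sNormE_nonneg r _))]
  refine sNormE_le_of_forall_diag fun F K hF hK => Real.le_sqrt_of_sq_le ?_
  have hentry (i : n) : ‖(F * (Lᴴ * R) * K).diag i‖ ^ 2 ≤
      ‖(F * (Lᴴ * L) * Fᴴ).diag i‖ * ‖(Kᴴ * (Rᴴ * R) * K).diag i‖ := by
    simpa only [conjTranspose_mul, conjTranspose_conjTranspose, Matrix.mul_assoc, diag_apply] using
      norm_sq_conjTranspose_mul_apply_le (L * Fᴴ) (R * K) i i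
  exact (norm_toLp_sq_le_mul hentry).trans <| mul_le_mul
    (norm_toLp_diag_mul_mul_le r hF (norm_conjTranspose_le_one hF) _)
    (norm_toLp_diag_mul_mul_le r (norm_conjTranspose_le_one hK) hK _) (norm_nonneg _)
    (sNormE_nonneg r _)

lemma exists_isometry_diag_of_mul_eq_mul_diagonal {Z M : Matrix n n ℂ} {μ : n → ℂ} (hM : IsUnit M)
    (hZ : Z * M = M * diagonal μ) :
    ∃ U : Matrix n n ℂ, Uᴴ * U = 1 ∧ ∀ i, (Uᴴ * Z * U) i i = μ i := by
  have hli : LinearIndependent ℂ fun i => WithLp.toLp 2 (M.col i) :=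
    (linearIndependent_cols_iff_isUnit.2 hM).map'
      (WithLp.linearEquiv 2 ℂ (n → ℂ)).symm.toLinearMap (LinearEquiv.ker _)
  have heig (i : n) : toEuclideanLin Z (WithLp.toLp 2 (M.col i)) =
      μ i • WithLp.toLp 2 (M.col i) := by
    ext k
    have h := congrFun (congrFun hZ k) i
    rw [mul_diagonal, mul_comm] at h
    exact h
  obtain ⟨e, he, hμ⟩ := exists_orthonormal_inner_map_of_eigenvectors hli heig
  refine ⟨Matrix.of fun k i => e i k, ?_, fun i => ?_⟩
  · ext i j
    rw [Matrix.one_apply, ← orthonormal_iff_ite.1 he i j, Matrix.mul_apply, PiLp.inner_apply]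
    exact Finset.sum_congr rfl fun k _ => mul_comm _ _
  · rw [← hμ i, Matrix.mul_assoc, Matrix.mul_apply, PiLp.inner_apply]
    exact Finset.sum_congr rfl fun k _ => mul_comm _ _

-- Weyl's majorant inequality, with Gram–Schmidt in place of a Schur triangularisation.
lemma norm_toLp_le_sNormE_of_mul_eq_mul_diagonal (q : ℝ≥0∞) [Fact (1 ≤ q)] {Z M : Matrix n n ℂ}
    {μ : n → ℂ} (hM : IsUnit M) (hZ : Z * M = M * diagonal μ) :
    ‖WithLp.toLp q μ‖ ≤ sNormE q Z := by
  obtain ⟨U, hU, hμ⟩ := exists_isometry_diag_of_mul_eq_mul_diagonal hM hZ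
  have hUn : ‖U‖ ≤ 1 := norm_le_one_of_conjTranspose_mul_self_le_one hU.le
  exact (norm_toLp_congr fun i => by rw [diag_apply, hμ]).trans_le <|
    norm_toLp_diag_mul_mul_le q (norm_conjTranspose_le_one hUn) hUn Z

lemma sNormE_le_of_isHermitian_of_conj (q : ℝ≥0∞) [Fact (1 ≤ q)] {H Z T T' : Matrix n n ℂ}
    (hH : H.IsHermitian) (hT : T' * T = 1) (h : H = T * Z * T') : sNormE q H ≤ sNormE q Z := by
  have hT' : T * T' = 1 := mul_eq_one_comm.1 hT
  let W : Matrix n n ℂ := ↑hH.eigenvectorUnitary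
  have hW : Wᴴ * W = 1 := Unitary.coe_star_mul_self hH.eigenvectorUnitary
  have hHW : H * W = W * diagonal fun i => (hH.eigenvalues i : ℂ) := by
    nth_rw 1 [eq_eigenvectorUnitary_mul_diagonal_mul hH]
    rw [Matrix.mul_assoc, hW, Matrix.mul_one]
  have hunit : IsUnit (T' * W) := by
    refine IsUnit.of_mul_eq_one_right (Wᴴ * T) ?_
    rw [Matrix.mul_assoc, ← Matrix.mul_assoc T, hT', Matrix.one_mul, hW]
  have hZ : Z * (T' * W) = T' * W * diagonal fun i => (hH.eigenvalues i : ℂ) := by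
    rw [Matrix.mul_assoc T', ← hHW, h]
    simp only [← Matrix.mul_assoc, hT, Matrix.one_mul]
  refine (sNormE_le_norm_toLp_eigenvalues q hH).trans ?_
  exact (norm_toLp_congr fun i => (Complex.norm_real _).symm).trans_le
    (norm_toLp_le_sNormE_of_mul_eq_mul_diagonal q hunit hZ)

/-- The geometric mean `P # Q` of two positive definite matrices, the positive definite solution
`G` of the Riccati equation `G * P⁻¹ * G = Q`. Outside of positive definite matrices the value is
junk. -/
noncomputable def geomMean (P Q : Matrix n n ℂ) : Matrix n n ℂ :=
  CFC.sqrt P * CFC.sqrt ((CFC.sqrt P)⁻¹ * Q * (CFC.sqrt P)⁻¹) * CFC.sqrt P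

lemma posDef_sqrt {P : Matrix n n ℂ} (hP : P.PosDef) : (CFC.sqrt P).PosDef :=
  Matrix.isStrictlyPositive_iff_posDef.1 (Matrix.isStrictlyPositive_iff_posDef.2 hP).sqrt

lemma sqrt_mul_sqrt_of_posDef {P : Matrix n n ℂ} (hP : P.PosDef) : CFC.sqrt P * CFC.sqrt P = P :=
  CFC.sqrt_mul_sqrt_self P (Matrix.nonneg_iff_posSemidef.2 hP.posSemidef)

lemma posDef_mul_mul {l : Type*} [Fintype l] {S Q : Matrix l l ℂ} (hS : S.PosDef)
    (hQ : Q.PosDef) : (S * Q * S).PosDef := by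
  classical
  have h := (hS.isUnit.posDef_star_left_conjugate_iff (x := Q)).2 hQ
  rwa [star_eq_conjTranspose, hS.isHermitian.eq] at h

lemma posDef_geomMean {P Q : Matrix n n ℂ} (hP : P.PosDef) (hQ : Q.PosDef) :
    (geomMean P Q).PosDef :=
  posDef_mul_mul (posDef_sqrt hP) (posDef_sqrt (posDef_mul_mul (posDef_sqrt hP).inv hQ))

lemma inv_sqrt_mul_inv_sqrt {P : Matrix n n ℂ} (hP : P.PosDef) :
    (CFC.sqrt P)⁻¹ * (CFC.sqrt P)⁻¹ = P⁻¹ := by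
  rw [← Matrix.mul_inv_rev, sqrt_mul_sqrt_of_posDef hP]

lemma geomMean_mul_inv_mul_geomMean {P Q : Matrix n n ℂ} (hP : P.PosDef) (hQ : Q.PosDef) :
    geomMean P Q * P⁻¹ * geomMean P Q = Q := by
  have hS := posDef_sqrt hP
  have hT := sqrt_mul_sqrt_of_posDef (posDef_mul_mul hS.inv hQ)
  rw [geomMean, ← inv_sqrt_mul_inv_sqrt hP]
  set S := CFC.sqrt P
  set T := CFC.sqrt (S⁻¹ * Q * S⁻¹)
  have hdet : IsUnit S.det := hS.det_pos.ne'.isUnit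
  calc S * T * S * (S⁻¹ * S⁻¹) * (S * T * S) = S * (T * T) * S := by
        simp only [Matrix.mul_assoc, mul_nonsing_inv_cancel_left _ _ hdet,
          nonsing_inv_mul_cancel_left _ _ hdet]
    _ = S * (S⁻¹ * Q * S⁻¹) * S := by rw [hT]
    _ = Q := by
        simp only [Matrix.mul_assoc, mul_nonsing_inv_cancel_left _ _ hdet, nonsing_inv_mul _ hdet,
          Matrix.mul_one]

lemma sNormE_geomMean_sq_le (r : ℝ≥0∞) [Fact (1 ≤ r)] {P Q : Matrix n n ℂ} (hP : P.PosDef)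
    (hQ : Q.PosDef) : sNormE r (geomMean P Q) ^ 2 ≤ sNormE r P * sNormE r Q := by
  have hS := posDef_sqrt hP
  have hG := posDef_geomMean hP hQ
  have h := sNormE_conjTranspose_mul_sq_le r (CFC.sqrt P) ((CFC.sqrt P)⁻¹ * geomMean P Q)
  rwa [conjTranspose_mul, hS.isHermitian.eq, hS.inv.isHermitian.eq, hG.isHermitian.eq,
    ← Matrix.mul_assoc, mul_nonsing_inv _ hS.det_pos.ne'.isUnit, Matrix.one_mul,
    sqrt_mul_sqrt_of_posDef hP, Matrix.mul_assoc, ← Matrix.mul_assoc (CFC.sqrt P)⁻¹,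
    inv_sqrt_mul_inv_sqrt hP, ← Matrix.mul_assoc, geomMean_mul_inv_mul_geomMean hP hQ] at h

lemma norm_mul_le_one_of_conjTranspose_mul_self_le {B D Q : Matrix n n ℂ} (hB : Bᴴ * B ≤ Q)
    (hD : Dᴴ * Q * D = 1) : ‖B * D‖ ≤ 1 := by
  refine norm_le_one_of_conjTranspose_mul_self_le_one ?_
  calc (B * D)ᴴ * (B * D) = Dᴴ * (Bᴴ * B) * D := by
        simp only [conjTranspose_mul, Matrix.mul_assoc]
    _ ≤ Dᴴ * Q * D := star_left_conjugate_le_conjugate hB D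
    _ = 1 := hD

-- `C⁻¹ * (A * Y * B) * C⁻¹` is similar to the compression `F * Y * K` of `Y` by the contractions
-- `F = P^(-1/2) * A` and `K = B * G⁻¹ * P^(1/2)`, where `G = C * C` solves `G * P⁻¹ * G = Q`.
lemma sNormE_inv_mul_mul_inv_le (q : ℝ≥0∞) [Fact (1 ≤ q)] {A B C P Q Y : Matrix n n ℂ}
    (hP : P.PosDef) (hC : C.PosDef) (hA : A * Aᴴ ≤ P) (hB : Bᴴ * B ≤ Q)
    (hQ : C * C * P⁻¹ * (C * C) = Q) (hH : (C⁻¹ * (A * Y * B) * C⁻¹).IsHermitian) :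
    sNormE q (C⁻¹ * (A * Y * B) * C⁻¹) ≤ sNormE q Y := by
  have hS := posDef_sqrt hP
  have hSinv := inv_sqrt_mul_inv_sqrt hP
  have hSS := sqrt_mul_sqrt_of_posDef hP
  set S := CFC.sqrt P
  have hSdet : IsUnit S.det := hS.det_pos.ne'.isUnit
  have hCdet : IsUnit C.det := hC.det_pos.ne'.isUnit
  have hF : ‖S⁻¹ * A‖ ≤ 1 := by
    rw [← l2_opNorm_conjTranspose, conjTranspose_mul, hS.inv.isHermitian.eq]
    refine norm_mul_le_one_of_conjTranspose_mul_self_le (Q := P) (by simpa using hA) ?_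
    rw [hS.inv.isHermitian.eq, ← hSS, ← Matrix.mul_assoc, nonsing_inv_mul _ hSdet, Matrix.one_mul,
      mul_nonsing_inv _ hSdet]
  have hK : ‖B * (C⁻¹ * C⁻¹ * S)‖ ≤ 1 := by
    refine norm_mul_le_one_of_conjTranspose_mul_self_le hB ?_
    rw [conjTranspose_mul, conjTranspose_mul, hS.isHermitian.eq, hC.inv.isHermitian.eq, ← hQ,
      ← hSinv]
    simp only [Matrix.mul_assoc, mul_nonsing_inv_cancel_left _ _ hCdet,
      nonsing_inv_mul_cancel_left _ _ hCdet, mul_nonsing_inv_cancel_left _ _ hSdet,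
      nonsing_inv_mul _ hSdet]
  refine (sNormE_le_of_isHermitian_of_conj q hH (T := C⁻¹ * S) (T' := S⁻¹ * C)
    (Z := S⁻¹ * A * Y * (B * (C⁻¹ * C⁻¹ * S))) ?_ ?_).trans (sNormE_mul_mul_le q hF hK Y)
  · rw [Matrix.mul_assoc, mul_nonsing_inv_cancel_left _ _ hCdet, nonsing_inv_mul _ hSdet]
  · simp only [Matrix.mul_assoc, mul_nonsing_inv_cancel_left _ _ hSdet,
      nonsing_inv_mul _ hCdet, Matrix.mul_one]

lemma kronecker_one_le_kronecker_one {l m : Type*} [Finite l] [Finite m] [DecidableEq m]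
    {M N : Matrix l l ℂ} (h : M ≤ N) : M ⊗ₖ (1 : Matrix m m ℂ) ≤ N ⊗ₖ 1 := by
  have hsub : N ⊗ₖ (1 : Matrix m m ℂ) - M ⊗ₖ 1 = (N - M) ⊗ₖ 1 := by
    rw [sub_eq_iff_eq_add, ← add_kronecker, sub_add_cancel]
  rw [Matrix.le_iff] at h ⊢
  exact hsub ▸ h.kronecker PosSemidef.one

lemma exists_posDef_factorization_of_conjTranspose_mul_self_le {m : Type*} [Fintype m]
    [DecidableEq m] (q r : ℝ≥0∞) [Fact (1 ≤ q)] [Fact (1 ≤ r)] {A B P Q : Matrix n n ℂ}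
    {X Y : Matrix (n × m) (n × m) ℂ} (hX : X.IsHermitian)
    (hfactor : X = (A ⊗ₖ (1 : Matrix m m ℂ)) * Y * (B ⊗ₖ 1)) (hP : P.PosDef) (hQ : Q.PosDef)
    (hA : A * Aᴴ ≤ P) (hB : Bᴴ * B ≤ Q) :
    ∃ (C : Matrix n n ℂ) (Y' : Matrix (n × m) (n × m) ℂ), C.PosDef ∧
      X = (C ⊗ₖ (1 : Matrix m m ℂ)) * Y' * (Cᴴ ⊗ₖ 1) ∧
      (sNormE (2 * r) C ^ 2) ^ 2 ≤ sNormE r P * sNormE r Q ∧ sNormE q Y' ≤ sNormE q Y := by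
  have hG := posDef_geomMean hP hQ
  have hC := posDef_sqrt hG
  have hCC := sqrt_mul_sqrt_of_posDef hG
  have hRiccati := geomMean_mul_inv_mul_geomMean hP hQ
  have hnorm := sNormE_geomMean_sq_le r hP hQ
  rw [← hCC] at hRiccati
  set C := CFC.sqrt (geomMean P Q)
  let C₁ : Matrix (n × m) (n × m) ℂ := C ⊗ₖ 1
  have hC₁ : C₁.PosDef := hC.kronecker .one
  have hdet : IsUnit C₁.det := hC₁.det_pos.ne'.isUnit
  refine ⟨C, C₁⁻¹ * X * C₁⁻¹, hC, ?_, ?_, ?_⟩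
  · rw [hC.isHermitian.eq]
    change X = C₁ * (C₁⁻¹ * X * C₁⁻¹) * C₁
    simp only [Matrix.mul_assoc, mul_nonsing_inv_cancel_left _ _ hdet, nonsing_inv_mul _ hdet,
      Matrix.mul_one]
  · rwa [← sNormE_conjTranspose_mul_self, hC.isHermitian.eq, hCC]
  · have hH : (C₁⁻¹ * X * C₁⁻¹).IsHermitian := by
      simpa only [hC₁.inv.isHermitian.eq] using isHermitian_conjTranspose_mul_mul C₁⁻¹ hX
    rw [hfactor] at hH ⊢
    refine sNormE_inv_mul_mul_inv_le q (hP.kronecker (PosDef.one (n := m))) hC₁ ?_ ?_ ?_ hH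
      (Q := Q ⊗ₖ 1)
    · simpa only [conjTranspose_kronecker, conjTranspose_one, ← mul_kronecker_mul, Matrix.mul_one]
        using kronecker_one_le_kronecker_one hA
    · simpa only [conjTranspose_kronecker, conjTranspose_one, ← mul_kronecker_mul, Matrix.mul_one]
        using kronecker_one_le_kronecker_one hB
    · simp only [C₁, inv_kronecker, ← mul_kronecker_mul, inv_one, Matrix.mul_one, hRiccati]

lemma posDef_add_smul_one {ι : Type*} [DecidableEq ι] {M : Matrix ι ι ℂ} (hM : M.PosSemidef)
    {ε : ℝ} (hε : 0 < ε) : (M + (ε : ℂ) • (1 : Matrix ι ι ℂ)).PosDef :=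
  PosDef.posSemidef_add hM (PosDef.one.smul (by exact_mod_cast hε))

lemma le_add_smul_one {ι : Type*} [DecidableEq ι] (M : Matrix ι ι ℂ) {ε : ℝ} (hε : 0 ≤ ε) :
    M ≤ M + (ε : ℂ) • (1 : Matrix ι ι ℂ) :=
  le_add_of_nonneg_right <| Matrix.nonneg_iff_posSemidef.2 <|
    PosSemidef.one.smul (by exact_mod_cast hε)

lemma sNormE_add_smul_one_le (r : ℝ≥0∞) [Fact (1 ≤ r)] (M : Matrix n n ℂ) {ε : ℝ} (hε : 0 ≤ ε) :
    sNormE r (M + (ε : ℂ) • (1 : Matrix n n ℂ)) ≤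
      sNormE r M + ε * ‖WithLp.toLp r fun _ : n => (1 : ℝ)‖ := by
  have hdiag : (ε : ℂ) • (1 : Matrix n n ℂ) = diagonal fun _ => ((ε * 1 : ℝ) : ℂ) := by
    rw [smul_one_eq_diagonal, mul_one]
  have hsmul : ‖WithLp.toLp r fun _ : n => ε * (1 : ℝ)‖ =
      ε * ‖WithLp.toLp r fun _ : n => (1 : ℝ)‖ := by
    change ‖ε • WithLp.toLp r fun _ : n => (1 : ℝ)‖ = _
    rw [norm_smul, Real.norm_of_nonneg hε]
  refine (sNormE_add_le r _ _).trans (add_le_add_right ?_ _)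
  rw [hdiag, ← hsmul]
  exact sNormE_diagonal_le r _

lemma exists_posDef_factorization_sNormE_le {m : Type*} [Fintype m] [DecidableEq m]
    (q r : ℝ≥0∞) [Fact (1 ≤ q)] [Fact (1 ≤ r)] {A B : Matrix n n ℂ}
    {X Y : Matrix (n × m) (n × m) ℂ} (hX : X.IsHermitian)
    (hfactor : X = (A ⊗ₖ (1 : Matrix m m ℂ)) * Y * (B ⊗ₖ 1)) {ε : ℝ} (hε : 0 < ε) :
    ∃ (C : Matrix n n ℂ) (Y' : Matrix (n × m) (n × m) ℂ), C.PosDef ∧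
      X = (C ⊗ₖ (1 : Matrix m m ℂ)) * Y' * (Cᴴ ⊗ₖ 1) ∧
      sNormE (2 * r) C * sNormE q Y' * sNormE (2 * r) Cᴴ ≤
        √((sNormE (2 * r) A ^ 2 + ε * ‖WithLp.toLp r fun _ : n => (1 : ℝ)‖) *
          (sNormE (2 * r) B ^ 2 + ε * ‖WithLp.toLp r fun _ : n => (1 : ℝ)‖)) * sNormE q Y := by
  obtain ⟨C, Y', hC, hXC, hnormC, hnormY⟩ :=
    exists_posDef_factorization_of_conjTranspose_mul_self_le q r hX hfactor
      (posDef_add_smul_one (posSemidef_self_mul_conjTranspose A) hε)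
      (posDef_add_smul_one (posSemidef_conjTranspose_mul_self B) hε)
      (le_add_smul_one _ hε.le) (le_add_smul_one _ hε.le)
  refine ⟨C, Y', hC, hXC, ?_⟩
  have hnormP := sNormE_add_smul_one_le r (A * Aᴴ) hε.le
  have hnormQ := sNormE_add_smul_one_le r (Bᴴ * B) hε.le
  rw [sNormE_mul_conjTranspose_self] at hnormP
  rw [sNormE_conjTranspose_mul_self] at hnormQ
  calc sNormE (2 * r) C * sNormE q Y' * sNormE (2 * r) Cᴴ
      = sNormE (2 * r) C ^ 2 * sNormE q Y' := by
        rw [sNormE_conjTranspose]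
        ring
    _ ≤ _ := mul_le_mul (Real.le_sqrt_of_sq_le <| hnormC.trans <|
        mul_le_mul hnormP hnormQ (sNormE_nonneg r _) (by positivity)) hnormY
        (sNormE_nonneg q _) (Real.sqrt_nonneg _)

end Schatten

lemma le_mul_mul_of_forall_pos_le_sqrt {a b c y N : ℝ} (ha : 0 ≤ a) (hb : 0 ≤ b)
    (h : ∀ ε > 0, c ≤ √((a ^ 2 + ε * N) * (b ^ 2 + ε * N)) * y) : c ≤ a * y * b := by
  let bound (ε : ℝ) : ℝ := √((a ^ 2 + ε * N) * (b ^ 2 + ε * N)) * y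
  have hbound_zero : bound 0 = a * y * b := by
    simp only [bound, zero_mul, add_zero, ← mul_pow]
    rw [Real.sqrt_sq (mul_nonneg ha hb)]
    ring
  have hlim : Filter.Tendsto bound (nhdsWithin 0 (Set.Ioi 0)) (nhds (a * y * b)) := by
    rw [← hbound_zero]
    exact (by fun_prop : Continuous bound).continuousWithinAt
  exact ge_of_tendsto hlim (eventually_nhdsWithin_of_forall h)

theorem stmt5_general {m n : Type*} [Fintype m] [DecidableEq m] [Fintype n] [DecidableEq n]
    (q r : ℝ≥0∞) (hq : 1 ≤ q) (hr : 1 ≤ r) (X : Matrix (n × m) (n × m) ℂ) (hX : X.IsHermitian) :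
    sInf {c : ℝ | ∃ (A : Matrix n n ℂ) (Y : Matrix (n × m) (n × m) ℂ), A.PosDef ∧
        X = (A ⊗ₖ (1 : Matrix m m ℂ)) * Y * (Aᴴ ⊗ₖ 1) ∧
        c = sNormE (2 * r) A * sNormE q Y * sNormE (2 * r) Aᴴ} =
    sInf {c : ℝ | ∃ (A B : Matrix n n ℂ) (Y : Matrix (n × m) (n × m) ℂ),
        X = (A ⊗ₖ (1 : Matrix m m ℂ)) * Y * (B ⊗ₖ 1) ∧
        c = sNormE (2 * r) A * sNormE q Y * sNormE (2 * r) B} := by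
  have : Fact (1 ≤ q) := ⟨hq⟩
  have : Fact (1 ≤ r) := ⟨hr⟩
  have hone : X = ((1 : Matrix n n ℂ) ⊗ₖ (1 : Matrix m m ℂ)) * X * (1 ⊗ₖ 1) := by simp
  have hnonneg (A B : Matrix n n ℂ) (Y : Matrix (n × m) (n × m) ℂ) :
      0 ≤ sNormE (2 * r) A * sNormE q Y * sNormE (2 * r) B :=
    mul_nonneg (mul_nonneg (sNormE_nonneg _ A) (sNormE_nonneg q Y)) (sNormE_nonneg _ B)
  refine le_antisymm (le_csInf ⟨_, 1, 1, X, hone, rfl⟩ ?_) (csInf_le_csInf ⟨0, ?_⟩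
    ⟨_, 1, X, .one, by simp, rfl⟩ ?_)
  · rintro _ ⟨A, B, Y, hfactor, rfl⟩
    refine le_mul_mul_of_forall_pos_le_sqrt (N := ‖WithLp.toLp r fun _ : n => (1 : ℝ)‖)
      (sNormE_nonneg _ A) (sNormE_nonneg _ B) fun ε hε => ?_
    obtain ⟨C, Y', hC, hXC, hle⟩ := exists_posDef_factorization_sNormE_le q r hX hfactor hε
    refine csInf_le_of_le ⟨0, ?_⟩ ⟨C, Y', hC, hXC, rfl⟩ hle
    rintro _ ⟨A, Y, -, -, rfl⟩
    exact hnonneg A Aᴴ Y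
  · rintro _ ⟨A, B, Y, -, rfl⟩
    exact hnonneg A B Y
  · rintro _ ⟨A, Y, -, hfactor, rfl⟩
    exact ⟨A, Aᴴ, Y, hfactor, rfl⟩

/-- for `1 ≤ p ≤ q ≤ ∞`, `1/p = 1/q + 1/r`, and a positive semidefinite `X` on
`ℂ^d ⊗ ℂ^{d'}`, the infimum of `‖A‖_{S_{2r}}‖Y‖_{S_q}‖A*‖_{S_{2r}}` over symmetric positive
factorizations `X = (A⊗I) Y (A*⊗I)` (with `A` positive definite) equals the infimum of
`‖A‖_{S_{2r}}‖Y‖_{S_q}‖B‖_{S_{2r}}` over all factorizations `X = (A⊗I) Y (B⊗I)`. -/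
theorem stmt5 {d d' : ℕ} (p q r : ℝ≥0∞) (hp : 1 ≤ p) (hpq : p ≤ q)
    (hr : 1 / p = 1 / q + 1 / r)
    (X : Matrix (Fin d × Fin d') (Fin d × Fin d') ℂ) (hX : X.PosSemidef) :
    sInf {c : ℝ | ∃ (A : Matrix (Fin d) (Fin d) ℂ)
        (Y : Matrix (Fin d × Fin d') (Fin d × Fin d') ℂ), A.PosDef ∧
        X = (A ⊗ₖ (1 : Matrix (Fin d') (Fin d') ℂ)) * Y * (Aᴴ ⊗ₖ 1) ∧
        c = sNormE (2 * r) A * sNormE q Y * sNormE (2 * r) Aᴴ} =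
    sInf {c : ℝ | ∃ (A B : Matrix (Fin d) (Fin d) ℂ)
        (Y : Matrix (Fin d × Fin d') (Fin d × Fin d') ℂ),
        X = (A ⊗ₖ (1 : Matrix (Fin d') (Fin d') ℂ)) * Y * (B ⊗ₖ 1) ∧
        c = sNormE (2 * r) A * sNormE q Y * sNormE (2 * r) B} := by
  have hr₁ : 1 ≤ r := by
    refine ENNReal.inv_le_one.1 ?_
    rw [← one_div]
    exact le_add_self.trans (hr ▸ (by simpa using hp : 1 / p ≤ 1))
  exact stmt5_general q r (hp.trans hpq) hr₁ X hX.isHermitian
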